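/- Let k be a field of characteristic 0 and B = ⊕_{n∈ℕ} B_n an ℕ-graded normal affine k-domain such that the prime ideal B_+ = ⊕_{n>0} B_n has height at least 2. Let x be a homogeneous prime element of B of degree d > 0. If the ring B_{(x)} is non-rigid, then the ring (B/xB)^{(d)} is non-rigid. -/

import Mathlib

noncomputable section

/-- A derivation is locally nilpotent. -/
def IsLND {R : Type*} [CommRing R] (D : Derivation ℤ R R) : Prop :=
  ∀ b : R, ∃ n : ℕ, 0 < n ∧ (⇑D)^[n] b = 0

/-- Kernel of a derivation, as a subring. -/
def kerDer {R : Type*} [CommRing R] (D : Derivation ℤ R R) : Subring R where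
  carrier := {x | D x = 0}
  one_mem' := by simp
  mul_mem' := by
    intro a b ha hb
    simp only [Set.mem_setOf_eq] at *
    rw [Derivation.leibniz, ha, hb]
    simp
  add_mem' := by
    intro a b ha hb
    simp only [Set.mem_setOf_eq] at *
    rw [map_add, ha, hb, add_zero]
  zero_mem' := by simp
  neg_mem' := by
    intro a ha
    simp only [Set.mem_setOf_eq] at *
    rw [map_neg, ha, neg_zero]

section Graded

variable {G : Type*} [AddCommGroup G] {B : Type*} [CommRing B]

/-- The Veronese subring `B^{(H)} = ⊕_{i ∈ H} B_i` of a `G`-graded ring,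
realized as the subring generated by the homogeneous elements whose degree lies in `H`. -/
def verSub (𝒜 : G → AddSubgroup B) (H : AddSubgroup G) : Subring B :=
  Subring.closure (⋃ i ∈ (H : Set G), (𝒜 i : Set B))

/-- 𝔾(B): the subgroup of G generated by the degrees of nonzero homogeneous elements. -/
def Gsub (𝒜 : G → AddSubgroup B) : AddSubgroup G :=
  AddSubgroup.closure { i : G | 𝒜 i ≠ ⊥ }

/-- `H ∈ 𝕋(B)`: the quotient `𝔾(B)/(H ∩ 𝔾(B))` is torsion. -/
def Tmem (𝒜 : G → AddSubgroup B) (H : AddSubgroup G) : Prop :=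
  ∀ g ∈ Gsub 𝒜, ∃ n : ℕ, 0 < n ∧ n • g ∈ H

/-- A homogeneous derivation of `B`. -/
def IsHomogDer (𝒜 : G → AddSubgroup B) (D : Derivation ℤ B B) : Prop :=
  ∃ d : G, ∀ (i : G) (x : B), x ∈ 𝒜 i → D x ∈ 𝒜 (i + d)

/-- A homogeneous derivation of a graded subring `S` of `B`. -/
def IsHomogDerOn (𝒜 : G → AddSubgroup B) (S : Subring B) (D : Derivation ℤ S S) : Prop :=
  ∃ d : G, ∀ (i : G) (x : S), (x : B) ∈ 𝒜 i → ((D x : S) : B) ∈ 𝒜 (i + d)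

/-- 𝕄̄(B,p): the subgroup of G generated by the degrees i with B_i ⊄ p. -/
def Mbar (𝒜 : G → AddSubgroup B) (p : Ideal B) : AddSubgroup G :=
  AddSubgroup.closure { i : G | ¬ (𝒜 i : Set B) ⊆ (p : Set B) }

/-- A prime ideal of height 1. -/
def heightOne {R : Type*} [CommRing R] (p : Ideal R) : Prop :=
  p.IsPrime ∧ (∃ q : Ideal R, q.IsPrime ∧ q < p) ∧
    ∀ q r : Ideal R, q.IsPrime → r.IsPrime → q < r → r < p → False

open Classical in
/-- 𝔾̄(B). -/
def Gbar (𝒜 : G → AddSubgroup B) : AddSubgroup G :=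
  if ∃ p : Ideal B, heightOne p then ⨅ p : {p : Ideal B // heightOne p}, Mbar 𝒜 p.1
  else Gsub 𝒜

end Graded

/-!
Write `V = B^{(d)}` and `A = B_(x)`. Since `x` is homogeneous of degree `d`, the localization
`V[1/x]` is the Laurent polynomial ring `A[T, T⁻¹]`, with `x` corresponding to `T`, so a nonzero
locally nilpotent derivation of `A` extends coefficientwise to one of `V[1/x]`. Such a derivation
vanishes at units, hence on `k` and at `x`. As `B` is integral over `V`, the algebra `V` is finitely
generated over `k`, so a multiple by a power of `x` maps `V` into `V`. After division by the highest
power of `x` that divides all its values, the result still kills `x` and induces a nonzero locally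
nilpotent derivation of `V / xV = (B / xB)^{(d)}`.
-/

/-- A ring is non-rigid if it carries a nonzero locally nilpotent derivation. -/
def IsNonrigid (R : Type*) [CommRing R] : Prop :=
  ∃ D : Derivation ℤ R R, IsLND D ∧ D ≠ 0

open Finset in
theorem iterate_derivation_mul {R A : Type*} [CommSemiring R] [CommSemiring A] [Algebra R A]
    (D : Derivation R A A) (n : ℕ) (a b : A) :
    D^[n] (a * b) =
      ∑ ij ∈ antidiagonal n, n.choose ij.1 • (D^[ij.1] a * D^[ij.2] b) := by
  induction n with
  | zero => simp
  | succ n ih =>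
    rw [sum_antidiagonal_choose_succ_nsmul (fun i j ↦ D^[i] a * D^[j] b) n]
    simp only [Function.iterate_succ_apply', ih, map_sum, map_nsmul, Derivation.leibniz,
      smul_eq_mul, smul_add, sum_add_distrib]
    congr 1
    refine sum_congr rfl fun ⟨i, j⟩ hij ↦ ?_
    rw [n.choose_symm_of_eq_add (mem_antidiagonal.1 hij).symm, mul_comm]

theorem iterate_derivation_eq_zero_of_le {R A : Type*} [CommSemiring R] [CommSemiring A]
    [Algebra R A] {D : Derivation R A A} {a : A} {m n : ℕ} (hmn : m ≤ n) (h : D^[m] a = 0) :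
    D^[n] a = 0 := by
  obtain ⟨l, rfl⟩ := Nat.exists_eq_add_of_le' hmn
  rw [Function.iterate_add_apply, h, iterate_map_zero]

open Finset in
theorem iterate_derivation_mul_top {R A : Type*} [CommSemiring R] [CommSemiring A] [Algebra R A]
    {D : Derivation R A A} {m n : ℕ} {a b : A} (ha : D^[m + 1] a = 0) (hb : D^[n + 1] b = 0) :
    D^[m + n] (a * b) = (m + n).choose m • (D^[m] a * D^[n] b) := by
  rw [iterate_derivation_mul]
  refine sum_eq_single_of_mem (m, n) (HasAntidiagonal.mem_antidiagonal.2 rfl)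
    fun ⟨i, j⟩ hij hne ↦ ?_
  obtain hi | hj : m + 1 ≤ i ∨ n + 1 ≤ j := by
    simp only [HasAntidiagonal.mem_antidiagonal, ne_eq, Prod.mk.injEq] at hij hne
    omega
  · rw [iterate_derivation_eq_zero_of_le hi ha, zero_mul, smul_zero]
  · rw [iterate_derivation_eq_zero_of_le hj hb, mul_zero, smul_zero]

theorem iterate_smul_derivation {R A : Type*} [CommSemiring R] [CommSemiring A] [Algebra R A]
    {D : Derivation R A A} {a : A} (ha : D a = 0) (n : ℕ) (b : A) :
    (a • D)^[n] b = a ^ n * D^[n] b := by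
  have hpow (n : ℕ) : D (a ^ n) = 0 := by rw [D.leibniz_pow, ha, smul_zero, smul_zero]
  induction n with
  | zero => simp
  | succ n ih =>
    rw [Function.iterate_succ_apply', ih, Function.iterate_succ_apply', Derivation.smul_apply,
      D.leibniz, hpow, smul_zero, add_zero, smul_eq_mul, smul_eq_mul, pow_succ', mul_assoc]

namespace IsLND

theorem exists_iterate_ne_zero {A : Type*} [CommRing A] {D : Derivation ℤ A A} (hD : IsLND D)
    {a : A} (ha : a ≠ 0) : ∃ n : ℕ, D^[n] a ≠ 0 ∧ D^[n + 1] a = 0 := by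
  classical
  have hex : ∃ n, D^[n] a = 0 := (hD a).imp fun _ ↦ And.right
  obtain ⟨n, hn⟩ : ∃ n, Nat.find hex = n + 1 :=
    Nat.exists_eq_succ_of_ne_zero fun h ↦ ha ((Nat.find_eq_zero hex).1 h)
  exact ⟨n, Nat.find_min hex (by omega), hn ▸ Nat.find_spec hex⟩

theorem apply_eq_zero_of_isUnit {A : Type*} [CommRing A] [IsDomain A] [CharZero A]
    {D : Derivation ℤ A A} (hD : IsLND D) {u : A} (hu : IsUnit u) : D u = 0 := by
  obtain ⟨v, huv⟩ := hu.exists_right_inv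
  obtain ⟨m, hm, hm'⟩ := hD.exists_iterate_ne_zero hu.ne_zero
  obtain ⟨n, hn, hn'⟩ := hD.exists_iterate_ne_zero (right_ne_zero_of_mul_eq_one huv)
  have htop : D^[m + n] (1 : A) ≠ 0 := by
    rw [← huv, iterate_derivation_mul_top hm' hn']
    exact smul_ne_zero (Nat.choose_pos (Nat.le_add_right m n)).ne' (mul_ne_zero hm hn)
  have hmn : ¬ 1 ≤ m + n := fun h ↦
    htop (iterate_derivation_eq_zero_of_le h D.map_one_eq_zero)
  obtain rfl : m = 0 := by omega
  exact hm'

theorem of_semiconj_injective {A B F : Type*} [CommRing A] [CommRing B] [FunLike F A B]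
    [AddMonoidHomClass F A B] {D : Derivation ℤ A A} {E : Derivation ℤ B B} {f : F}
    (hf : Function.Injective f) (h : Function.Semiconj f D E) (hE : IsLND E) : IsLND D := fun a ↦ by
  obtain ⟨n, hn, hna⟩ := hE (f a)
  refine ⟨n, hn, hf ?_⟩
  rw [h.iterate_right n a, hna, map_zero]

theorem of_semiconj_surjective {A B F : Type*} [CommRing A] [CommRing B] [FunLike F A B]
    [AddMonoidHomClass F A B] {D : Derivation ℤ A A} {E : Derivation ℤ B B} {f : F}
    (hf : Function.Surjective f) (h : Function.Semiconj f D E) (hD : IsLND D) : IsLND E :=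
  hf.forall.2 fun a ↦ by
    obtain ⟨n, hn, hna⟩ := hD a
    exact ⟨n, hn, by rw [← h.iterate_right n a, hna, map_zero]⟩

theorem smul {A : Type*} [CommRing A] {D : Derivation ℤ A A} (hD : IsLND D) {a : A}
    (ha : D a = 0) : IsLND (a • D) := fun b ↦ by
  obtain ⟨n, hn, hb⟩ := hD b
  exact ⟨n, hn, by rw [iterate_smul_derivation ha, hb, mul_zero]⟩

theorem of_smul {A : Type*} [CommRing A] [IsDomain A] {D : Derivation ℤ A A} {a : A}
    (ha₀ : a ≠ 0) (ha : D a = 0) (hD : IsLND (a • D)) : IsLND D := fun b ↦ by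
  obtain ⟨n, hn, hb⟩ := hD b
  rw [iterate_smul_derivation ha] at hb
  exact ⟨n, hn, (mul_eq_zero.1 hb).resolve_left (pow_ne_zero n ha₀)⟩

end IsLND

theorem exists_derivation_of_forall_mem_range {R A M N : Type*} [CommSemiring R] [CommSemiring A]
    [Algebra R A] [AddCommGroup M] [AddCommGroup N] [Module A M] [Module A N] [Module R M]
    [Module R N] [IsScalarTower R A M] [IsScalarTower R A N] (D : Derivation R A M)
    {f : N →ₗ[A] M} (hf : Function.Injective f) (h : ∀ a, D a ∈ LinearMap.range f) :
    ∃ δ : Derivation R A N, ∀ a, f (δ a) = D a := by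
  choose g hg using h
  let gₗ : A →ₗ[R] N :=
    { toFun := g
      map_add' a b := hf (by rw [map_add, hg, hg, hg, map_add])
      map_smul' r a := hf (by
        rw [RingHom.id_apply, ← algebraMap_smul A r (g a), map_smul, hg, hg, D.map_smul,
          algebraMap_smul]) }
  refine ⟨Derivation.mk' gₗ fun a b ↦ hf ?_, hg⟩
  change f (g (a * b)) = f (a • g b + b • g a)
  rw [map_add, map_smul, map_smul, hg, hg, hg, D.leibniz]

theorem IsLND.exists_not_dvd_apply {A : Type*} [CommRing A] [IsDomain A] [WfDvdMonoid A]
    {D : Derivation ℤ A A} (hD : IsLND D) (hD₀ : D ≠ 0) {x : A} (hx₀ : x ≠ 0)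
    (hxu : ¬ IsUnit x) (hDx : D x = 0) :
    ∃ E : Derivation ℤ A A, IsLND E ∧ E x = 0 ∧ ∃ a, ¬ x ∣ E a := by
  classical
  have hex : ∃ n : ℕ, ∃ a, ¬ x ^ n ∣ D a := by
    obtain ⟨a, ha⟩ := DFunLike.ne_iff.1 hD₀
    exact (FiniteMultiplicity.of_not_isUnit hxu ha).imp' (· + 1) fun _ h ↦ ⟨a, h⟩
  obtain ⟨n, hn⟩ : ∃ n, Nat.find hex = n + 1 :=
    Nat.exists_eq_succ_of_ne_zero fun h ↦ by
      obtain ⟨a, ha⟩ := (Nat.find_eq_zero hex).1 h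
      exact ha (by rw [pow_zero]; exact one_dvd _)
  have hdvd (a : A) : x ^ n ∣ D a := by
    by_contra h
    exact Nat.find_min hex (by omega) ⟨a, h⟩
  have hxn : x ^ n ≠ 0 := pow_ne_zero n hx₀
  obtain ⟨E, hE⟩ := exists_derivation_of_forall_mem_range D (f := LinearMap.mulLeft A (x ^ n))
    (mul_right_injective₀ hxn) fun a ↦ (hdvd a).imp fun _ ↦ Eq.symm
  replace hE (a : A) : x ^ n * E a = D a := hE a
  have hEx : E x = 0 := (mul_eq_zero.1 ((hE x).trans hDx)).resolve_left hxn
  have hExn : E (x ^ n) = 0 := by rw [E.leibniz_pow, hEx, smul_zero, smul_zero]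
  have hEsmul : x ^ n • E = D := Derivation.ext hE
  refine ⟨E, IsLND.of_smul hxn hExn (hEsmul ▸ hD), hEx, ?_⟩
  obtain ⟨a, ha⟩ := hn ▸ Nat.find_spec hex
  exact ⟨a, fun h ↦ ha (by rw [← hE, pow_succ]; exact mul_dvd_mul_left _ h)⟩

theorem IsLND.isNonrigid_of_surjective {A C : Type*} [CommRing A] [CommRing C]
    {D : Derivation ℤ A A} (hD : IsLND D) {x : A} (hDx : D x = 0) (hdvd : ∃ a, ¬ x ∣ D a)
    {π : A →+* C} (hπ : Function.Surjective π) (hker : RingHom.ker π = Ideal.span {x}) :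
    IsNonrigid C := by
  have hmem {a : A} : π a = 0 ↔ x ∣ a := by
    rw [← RingHom.mem_ker, hker, Ideal.mem_span_singleton]
  have hD_ker (a : A) (ha : π.toIntAlgHom a = 0) : π.toIntAlgHom (D a) = 0 := by
    obtain ⟨c, rfl⟩ := hmem.1 ha
    refine hmem.2 ?_
    rw [D.leibniz, hDx, smul_zero, add_zero]
    exact dvd_mul_right x (D c)
  have hcomm (a : A) : Derivation.liftOfSurjective (f := π.toIntAlgHom) hπ hD_ker (π a) = π (D a) :=
    Derivation.liftOfSurjective_apply (f := π.toIntAlgHom) hπ hD_ker a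
  refine ⟨_, IsLND.of_semiconj_surjective hπ (fun a ↦ (hcomm a).symm) hD, ?_⟩
  obtain ⟨a, ha⟩ := hdvd
  exact fun h ↦ ha (hmem.1 (by rw [← hcomm, h, Derivation.zero_apply]))

theorem exists_smul_derivation_mem_range {k A R : Type*} [CommRing k] [CommRing A] [CommRing R]
    [Algebra k A] [Algebra.FiniteType k A] [Algebra A R] (S : Submonoid A) [IsLocalization S R]
    (D : Derivation ℤ A R) (hD : ∀ c : k, D (algebraMap k A c) = 0) :
    ∃ s ∈ S, ∀ a, s • D a ∈ LinearMap.range (Algebra.linearMap A R) := by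
  obtain ⟨t, ht⟩ := Algebra.FiniteType.out (R := k) (A := A)
  obtain ⟨s, hs⟩ := IsLocalization.exist_integer_multiples S t D
  refine ⟨s, s.2, fun a ↦ ?_⟩
  induction (ht.symm ▸ Algebra.mem_top : a ∈ Algebra.adjoin k (t : Set A)) using
    Algebra.adjoin_induction with
  | mem a ha => exact hs a ha
  | algebraMap c => rw [hD, smul_zero]; exact zero_mem _
  | add a b _ _ ha hb => rw [map_add, smul_add]; exact add_mem ha hb
  | mul a b _ _ ha hb =>
    rw [D.leibniz, smul_add, smul_comm _ a, smul_comm _ b]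
    exact add_mem (Submodule.smul_mem _ a hb) (Submodule.smul_mem _ b ha)

theorem derivation_eq_zero_of_isLocalization {A R : Type*} [CommRing A] [CommRing R] [Algebra A R]
    (S : Submonoid A) [IsLocalization S R] {D : Derivation ℤ R R}
    (h : ∀ a, D (algebraMap A R a) = 0) : D = 0 := by
  refine Derivation.ext fun r ↦ ?_
  obtain ⟨⟨a, s⟩, has⟩ := IsLocalization.surj S r
  have hDr : algebraMap A R s * D r = 0 := by
    simpa only [D.leibniz, h, mul_zero, zero_add, smul_eq_mul] using congrArg D has
  exact (IsLocalization.map_units R s).mul_right_eq_zero.1 hDr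

theorem IsLND.exists_restrict_of_isLocalization {k A R : Type*} [CommRing k] [CommRing A]
    [IsDomain A] [Algebra k A] [Algebra.FiniteType k A] [CommRing R] [Algebra A R] {x : A}
    [IsLocalization.Away x R] (hx₀ : x ≠ 0) {D : Derivation ℤ R R} (hD : IsLND D) (hD₀ : D ≠ 0)
    (hDk : ∀ c : k, D (algebraMap A R (algebraMap k A c)) = 0)
    (hDx : D (algebraMap A R x) = 0) :
    ∃ E : Derivation ℤ A A, IsLND E ∧ E ≠ 0 ∧ E x = 0 := by
  have hS : Submonoid.powers x ≤ nonZeroDivisors A :=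
    powers_le_nonZeroDivisors_of_noZeroDivisors hx₀
  have : IsDomain R := IsLocalization.isDomain_of_le_nonZeroDivisors R hS
  have hinj : Function.Injective (algebraMap A R) := IsLocalization.injective R hS
  obtain ⟨_, ⟨n, rfl⟩, hn⟩ :=
    exists_smul_derivation_mem_range (k := k) (Submonoid.powers x) (D.compAlgebraMap A) hDk
  obtain ⟨E, hE⟩ := exists_derivation_of_forall_mem_range (x ^ n • D.compAlgebraMap A)
    (f := Algebra.linearMap A R) hinj hn
  let y := algebraMap A R x
  replace hE (a : A) : algebraMap A R (E a) = (y ^ n • D) (algebraMap A R a) := by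
    refine (hE a).trans ?_
    rw [Derivation.smul_apply, Algebra.smul_def, map_pow]; rfl
  have hyn : y ^ n ≠ 0 := pow_ne_zero n ((map_ne_zero_iff _ hinj).2 hx₀)
  have hDyn : D (y ^ n) = 0 := by rw [D.leibniz_pow, hDx, smul_zero, smul_zero]
  refine ⟨E, IsLND.of_semiconj_injective hinj hE (hD.smul hDyn), ?_, hinj ?_⟩
  · rintro rfl
    refine hD₀ (derivation_eq_zero_of_isLocalization (Submonoid.powers x) fun a ↦ ?_)
    have h := hE a
    rw [Derivation.zero_apply, map_zero] at h
    exact (mul_eq_zero.1 h.symm).resolve_left hyn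
  · rw [hE, Derivation.smul_apply, hDx, smul_zero, map_zero]

theorem IsNonrigid.of_isLocalization_away (k : Type*) {A R C : Type*} [Field k] [CharZero k]
    [CommRing A] [IsDomain A] [Algebra k A] [Algebra.FiniteType k A] [CommRing R] [Algebra A R]
    [CommRing C] {x : A} [IsLocalization.Away x R] (hx₀ : x ≠ 0) (hxu : ¬ IsUnit x) {π : A →+* C}
    (hπ : Function.Surjective π) (hker : RingHom.ker π = Ideal.span {x}) (hR : IsNonrigid R) :
    IsNonrigid C := by
  have : IsNoetherianRing A := Algebra.FiniteType.isNoetherianRing k A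
  have : IsDomain R := IsLocalization.isDomain_of_le_nonZeroDivisors R
    (powers_le_nonZeroDivisors_of_noZeroDivisors hx₀)
  have : CharZero R :=
    charZero_of_injective_ringHom ((algebraMap A R).comp (algebraMap k A)).injective
  obtain ⟨D, hD, hD₀⟩ := hR
  have hDk (c : k) : D (algebraMap A R (algebraMap k A c)) = 0 := by
    obtain rfl | hc := eq_or_ne c 0
    · simp only [map_zero]
    · exact hD.apply_eq_zero_of_isUnit ((hc.isUnit.map _).map _)
  have hDx : D (algebraMap A R x) = 0 :=
    hD.apply_eq_zero_of_isUnit (IsLocalization.Away.algebraMap_isUnit x)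
  obtain ⟨E, hE, hE₀, hEx⟩ := hD.exists_restrict_of_isLocalization hx₀ hD₀ hDk hDx
  obtain ⟨E', hE', hEx', hdvd⟩ := hE.exists_not_dvd_apply hE₀ hx₀ hxu hEx
  exact hE'.isNonrigid_of_surjective hEx' hdvd hπ hker

theorem IsNonrigid.of_addMonoidHom {A : Type*} [CommRing A] (f : A →+ A)
    (hmul : ∀ a b, f (a * b) = a * f b + b * f a) (hnil : ∀ a, ∃ n : ℕ, 0 < n ∧ f^[n] a = 0)
    (hf : f ≠ 0) : IsNonrigid A :=
  ⟨Derivation.mk' f.toIntLinearMap hmul, hnil, fun h ↦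
    hf (AddMonoidHom.ext fun a ↦ DFunLike.congr_fun h a)⟩

section AddMonoidAlgebra

open AddMonoidAlgebra

theorem addMonoidAlgebra_map_derivation_mul {A M : Type*} [CommRing A] [AddCommMonoid M]
    (D : Derivation ℤ A A) (p q : A[M]) :
    map (D : A →+ A) (p * q) = p * map (D : A →+ A) q + q * map (D : A →+ A) p := by
  induction p using induction_linear with
  | zero => simp only [zero_mul, AddMonoidAlgebra.map_zero, mul_zero, add_zero]
  | add p₁ p₂ h₁ h₂ =>
    rw [add_mul, AddMonoidAlgebra.map_add, h₁, h₂, AddMonoidAlgebra.map_add]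
    ring
  | single m a =>
    induction q using induction_linear with
    | zero => simp only [mul_zero, AddMonoidAlgebra.map_zero, zero_mul, add_zero]
    | add q₁ q₂ h₁ h₂ =>
      rw [mul_add, AddMonoidAlgebra.map_add, h₁, h₂, AddMonoidAlgebra.map_add]
      ring
    | single n b =>
      simp only [single_mul_single, map_single, add_comm n m, ← single_add, AddMonoidHom.coe_coe,
        D.leibniz, smul_eq_mul]

theorem IsNonrigid.addMonoidAlgebra {A : Type*} [CommRing A] (M : Type*) [AddCommMonoid M]
    (hA : IsNonrigid A) : IsNonrigid A[M] := by
  obtain ⟨D, hD, hD₀⟩ := hA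
  let f : A[M] →+ A[M] := AddMonoidHom.mk' (map (D : A →+ A)) (AddMonoidAlgebra.map_add _)
  have hf_single (m : M) (a : A) : f (single m a) = single m (D a) := map_single _ _ _
  refine .of_addMonoidHom f (addMonoidAlgebra_map_derivation_mul D) (fun p ↦ ?_) fun h ↦
    hD₀ (Derivation.ext fun a ↦ ?_)
  · induction p using induction_linear with
    | zero => exact ⟨1, one_pos, map_zero f⟩
    | add p q hp hq =>
      obtain ⟨m, hm, hp⟩ := hp
      obtain ⟨n, -, hq⟩ := hq
      refine ⟨n + m, Nat.add_pos_right n hm, ?_⟩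
      rw [iterate_map_add, Function.iterate_add_apply, hp, iterate_map_zero, zero_add, add_comm n m,
        Function.iterate_add_apply, hq, iterate_map_zero]
    | single m a =>
      obtain ⟨n, hn, ha⟩ := hD a
      have hsemi : Function.Semiconj (single m) D f := fun b ↦ (hf_single m b).symm
      exact ⟨n, hn, by rw [← hsemi.iterate_right n a, ha, single_zero]⟩
  · exact single_eq_zero.1 ((hf_single 0 a).symm.trans (DFunLike.congr_fun h _))

end AddMonoidAlgebra

section GradedRing

open DirectSum

variable {ι σ R : Type*} [DecidableEq ι] [AddMonoid ι] [SetLike σ R]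

theorem coe_decompose_mul_of_uniqueAdd [Semiring R] [AddSubmonoidClass σ R] (𝒜 : ι → σ)
    [GradedRing 𝒜] [∀ i (x : 𝒜 i), Decidable (x ≠ 0)] {a b : R} {i j : ι}
    (hi : i ∈ (decompose 𝒜 a).support) (hj : j ∈ (decompose 𝒜 b).support)
    (hij : UniqueAdd (decompose 𝒜 a).support (decompose 𝒜 b).support i j) :
    (decompose 𝒜 (a * b) (i + j) : R) = decompose 𝒜 a i * decompose 𝒜 b j := by
  rw [decompose_mul, coe_mul_apply]
  refine Finset.sum_eq_single_of_mem (i, j) ?_ fun p hp hne ↦ (hne ?_).elim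
  · exact Finset.mem_filter.2 ⟨Finset.mk_mem_product hi hj, rfl⟩
  · obtain ⟨hp, hsum⟩ := Finset.mem_filter.1 hp
    obtain ⟨h₁, h₂⟩ := Finset.mem_product.1 hp
    exact Prod.ext_iff.2 (hij h₁ h₂ hsum)

theorem add_eq_zero_of_uniqueAdd_of_mul_eq_one [Semiring R] [NoZeroDivisors R]
    [AddSubmonoidClass σ R] (𝒜 : ι → σ) [GradedRing 𝒜] [∀ i (x : 𝒜 i), Decidable (x ≠ 0)] {a b : R}
    {p : ι × ι} (hab : a * b = 1)
    (hp : p ∈ (decompose 𝒜 a).support ×ˢ (decompose 𝒜 b).support)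
    (hij : UniqueAdd (decompose 𝒜 a).support (decompose 𝒜 b).support p.1 p.2) :
    p.1 + p.2 = 0 := by
  obtain ⟨hi, hj⟩ := Finset.mem_product.1 hp
  by_contra hne
  have h := coe_decompose_mul_of_uniqueAdd 𝒜 hi hj hij
  rw [hab, decompose_of_mem_ne 𝒜 SetLike.GradedOne.one_mem (Ne.symm hne), eq_comm, mul_eq_zero,
    ZeroMemClass.coe_eq_zero, ZeroMemClass.coe_eq_zero] at h
  exact h.elim (DFinsupp.mem_support_iff.1 hi) (DFinsupp.mem_support_iff.1 hj)

theorem isHomogeneousElem_of_isUnit [TwoUniqueSums ι] [Semiring R] [IsDomain R]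
    [AddSubmonoidClass σ R] (𝒜 : ι → σ) [GradedRing 𝒜] {u : R} (hu : IsUnit u) :
    SetLike.IsHomogeneousElem 𝒜 u := by
  classical
  obtain ⟨v, huv⟩ := hu.exists_right_inv
  let s := (decompose 𝒜 u).support
  let t := (decompose 𝒜 v).support
  have hsupp {a : R} (ha : a ≠ 0) : (decompose 𝒜 a).support.Nonempty :=
    Finset.nonempty_of_ne_empty fun h ↦
      ha (by rw [← sum_support_decompose 𝒜 a, h, Finset.sum_empty])
  have ht : 0 < t.card := (hsupp (right_ne_zero_of_mul_eq_one huv)).card_pos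
  have hst : s.card * t.card ≤ 1 := by
    by_contra! h
    obtain ⟨p, hp, q, hq, hpq, hp', hq'⟩ := TwoUniqueSums.uniqueAdd_of_one_lt_card h
    obtain ⟨hq₁, hq₂⟩ := Finset.mem_product.1 hq
    have hsum : q.1 + q.2 = p.1 + p.2 :=
      (add_eq_zero_of_uniqueAdd_of_mul_eq_one 𝒜 huv hq hq').trans
        (add_eq_zero_of_uniqueAdd_of_mul_eq_one 𝒜 huv hp hp').symm
    exact hpq (Prod.ext_iff.2 (hp' hq₁ hq₂ hsum)).symm
  obtain ⟨i, hi⟩ := hsupp hu.ne_zero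
  have hs : s.card ≤ 1 := (Nat.le_mul_of_pos_right _ ht).trans hst
  refine ⟨i, ?_⟩
  rw [← sum_support_decompose 𝒜 u]
  exact sum_mem fun j hj ↦ Finset.card_le_one.1 hs i hi j hj ▸ SetLike.coe_mem _

theorem algebraMap_mem_zero {k : Type*} [TwoUniqueSums ι] [Field k] [Ring R] [IsDomain R]
    [Algebra k R] [AddSubgroupClass σ R] (𝒜 : ι → σ) [GradedRing 𝒜] (c : k) :
    algebraMap k R c ∈ 𝒜 0 := by
  have h1 : (1 : R) ∈ 𝒜 0 := SetLike.GradedOne.one_mem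
  obtain rfl | hc := eq_or_ne c 0
  · exact (map_zero (algebraMap k R)).symm ▸ zero_mem _
  obtain hc' | hc' := eq_or_ne (c + 1) 0
  · rw [eq_neg_of_add_eq_zero_left hc', map_neg, map_one]
    exact neg_mem h1
  obtain ⟨i, hi⟩ := isHomogeneousElem_of_isUnit 𝒜 (hc.isUnit.map (algebraMap k R))
  obtain ⟨j, hj⟩ := isHomogeneousElem_of_isUnit 𝒜 (hc'.isUnit.map (algebraMap k R))
  by_contra hc₀
  rw [map_add, map_one] at hj
  have hi₀ : i ≠ 0 := fun h ↦ hc₀ (h ▸ hi)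
  have hj₀ : j ≠ 0 := fun h ↦ hc₀ (add_sub_cancel_right (algebraMap k R c) 1 ▸ sub_mem (h ▸ hj) h1)
  -- The degree-zero component of `c + 1` is `1`, but it should vanish since `j ≠ 0`.
  have h := decompose_of_mem_ne 𝒜 hj hj₀
  rw [decompose_add, DirectSum.add_apply, AddMemClass.coe_add, decompose_of_mem_ne 𝒜 hi hi₀,
    zero_add, decompose_of_mem_same 𝒜 h1] at h
  exact one_ne_zero h

end GradedRing

open DirectSum

theorem exists_finiteType_of_isIntegral (k : Type*) {A B : Type*} [CommRing k] [IsNoetherianRing k]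
    [CommRing A] [CommRing B] [Algebra k B] [Algebra.FiniteType k B] {j : A →+* B}
    (hj : Function.Injective j) (hint : j.IsIntegral) (hk : (algebraMap k B).range ≤ j.range) :
    ∃ f : k →+* A, f.FiniteType := by
  let e : A ≃+* j.range := .ofBijective j.rangeRestrict
    ⟨fun _ _ h ↦ hj (congrArg Subtype.val h), j.rangeRestrict_surjective⟩
  let f : k →+* A := (e.symm : j.range →+* A).comp
    ((algebraMap k B).codRestrict j.range fun c ↦ hk ⟨c, rfl⟩)
  have hf (c : k) : algebraMap k B c = j (f c) :=
    congrArg Subtype.val (e.apply_symm_apply ⟨_, hk ⟨c, rfl⟩⟩).symm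
  algebraize [f, j]
  have : IsScalarTower k A B := .of_algebraMap_eq hf
  have : Algebra.IsIntegral A B := ⟨hint⟩
  have : Algebra.FiniteType A B := .of_restrictScalars_finiteType k A B
  have : Module.Finite A B := Algebra.IsIntegral.finite
  exact ⟨f, ⟨fg_of_fg_of_fg k A B Algebra.FiniteType.out Module.Finite.fg_top hj⟩⟩

/-- The grading `m ↦ 𝒜 (m * d)` of the `d`-th Veronese subring of a `ℤ`-graded ring. -/
def veroneseGrading {B : Type*} [CommRing B] (𝒜 : ℤ → AddSubgroup B) (d m : ℤ) : AddSubgroup B :=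
  𝒜 (m * d)

instance veroneseGrading.gradedMonoid {B : Type*} [CommRing B] (𝒜 : ℤ → AddSubgroup B)
    [SetLike.GradedMonoid 𝒜] (d : ℤ) :
    SetLike.GradedMonoid (veroneseGrading 𝒜 d) where
  one_mem := by
    rw [veroneseGrading, zero_mul]
    exact SetLike.GradedOne.one_mem
  mul_mem m n a b ha hb := by
    rw [veroneseGrading, add_mul]
    exact SetLike.GradedMul.mul_mem ha hb

/-- The `d`-th Veronese ring `⨁ m, 𝒜 (m * d)` of a `ℤ`-graded ring `B`. It is encoded as an external
direct sum, so that ring homomorphisms out of it can be defined degree by degree. -/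
abbrev VeroneseRing {B : Type*} [CommRing B] (𝒜 : ℤ → AddSubgroup B) (d : ℤ) : Type _ :=
  ⨁ m, veroneseGrading 𝒜 d m

namespace VeroneseRing

section

variable {B : Type*} [CommRing B] (𝒜 : ℤ → AddSubgroup B) [SetLike.GradedMonoid 𝒜] (d : ℤ)

/-- The comparison map from the Veronese ring to the ring `B` it comes from. -/
abbrev toRing : VeroneseRing 𝒜 d →+* B :=
  coeRingHom (veroneseGrading 𝒜 d)

variable {𝒜 d}

/-- An element of `𝒜 d`, regarded as an element of degree one of the `d`-th Veronese ring. -/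
def ofDegree {x : B} (hxd : x ∈ 𝒜 d) : VeroneseRing 𝒜 d :=
  of (fun m ↦ veroneseGrading 𝒜 d m) 1 ⟨x, by rwa [veroneseGrading, one_mul]⟩

theorem toRing_ofDegree {x : B} (hxd : x ∈ 𝒜 d) : toRing 𝒜 d (ofDegree hxd) = x :=
  coeRingHom_of _ _ _

theorem mem_range_toRing_of_mem {i : ℤ} (hi : d ∣ i) {b : B} (hb : b ∈ 𝒜 i) :
    b ∈ (toRing 𝒜 d).range := by
  obtain ⟨m, rfl⟩ := exists_eq_mul_left_of_dvd hi
  exact ⟨of (fun m ↦ veroneseGrading 𝒜 d m) m ⟨b, hb⟩, coeRingHom_of _ _ _⟩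

end

variable {B : Type*} [CommRing B] {𝒜 : ℤ → AddSubgroup B} [GradedRing 𝒜] {d : ℤ}

theorem decompose_toRing (hd : d ≠ 0) (v : VeroneseRing 𝒜 d) (m : ℤ) :
    (decompose 𝒜 (toRing 𝒜 d v) (m * d) : B) = v m := by
  induction v using DirectSum.induction_on with
  | zero => simp only [map_zero, decompose_zero, DirectSum.zero_apply, ZeroMemClass.coe_zero]
  | add v w hv hw =>
    simp only [map_add, decompose_add, DirectSum.add_apply, AddMemClass.coe_add, hv, hw]
  | of n b =>
    rw [coeRingHom_of]
    obtain rfl | hnm := eq_or_ne n m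
    · rw [decompose_of_mem_same 𝒜 b.2, of_eq_same]
    · rw [decompose_of_mem_ne 𝒜 b.2 ((mul_left_injective₀ hd).ne hnm), of_eq_of_ne _ _ _ hnm.symm,
        ZeroMemClass.coe_zero]

theorem toRing_injective (hd : d ≠ 0) : Function.Injective (toRing 𝒜 d) := fun v w h ↦
  DFinsupp.ext fun m ↦ Subtype.ext <| by
    rw [← decompose_toRing hd v, h, decompose_toRing hd w]

theorem mem_range_toRing_iff {b : B} :
    b ∈ (toRing 𝒜 d).range ↔ ∀ i, ¬ d ∣ i → (decompose 𝒜 b i : B) = 0 := by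
  classical
  refine ⟨?_, fun h ↦ ?_⟩
  · rintro ⟨v, rfl⟩ i hi
    induction v using DirectSum.induction_on with
    | zero => simp only [map_zero, decompose_zero, DirectSum.zero_apply, ZeroMemClass.coe_zero]
    | add v w hv hw =>
      simp only [map_add, decompose_add, DirectSum.add_apply, AddMemClass.coe_add, hv, hw, add_zero]
    | of n b =>
      rw [coeRingHom_of]
      exact decompose_of_mem_ne 𝒜 b.2 fun h ↦ hi (Dvd.intro_left n h)
  · rw [← sum_support_decompose 𝒜 b]
    refine sum_mem fun i _ ↦ ?_
    by_cases hi : d ∣ i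
    · exact mem_range_toRing_of_mem hi (SetLike.coe_mem _)
    · exact h i hi ▸ zero_mem _

theorem mem_range_toRing_of_mul_mem [NoZeroDivisors B] {x b : B} (hx : x ≠ 0) (hxd : x ∈ 𝒜 d)
    (h : x * b ∈ (toRing 𝒜 d).range) : b ∈ (toRing 𝒜 d).range := by
  rw [mem_range_toRing_iff] at h ⊢
  intro i hi
  have hxb := h (d + i) (mt dvd_add_self_left.1 hi)
  rw [coe_decompose_mul_add_of_left_mem 𝒜 hxd] at hxb
  exact (mul_eq_zero.1 hxb).resolve_left hx

theorem ker_mk_comp_toRing [NoZeroDivisors B] (hd : d ≠ 0) {x : B} (hx : x ≠ 0) (hxd : x ∈ 𝒜 d) :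
    RingHom.ker ((Ideal.Quotient.mk (Ideal.span {x})).comp (toRing 𝒜 d)) =
      Ideal.span {ofDegree hxd} := by
  ext v
  rw [RingHom.mem_ker, RingHom.comp_apply, Ideal.Quotient.eq_zero_iff_dvd, Ideal.mem_span_singleton]
  refine ⟨fun ⟨b, hb⟩ ↦ ?_, fun ⟨w, hw⟩ ↦ ?_⟩
  · obtain ⟨w, rfl⟩ := mem_range_toRing_of_mul_mem hx hxd ⟨v, hb⟩
    exact ⟨w, toRing_injective hd (by rw [map_mul, toRing_ofDegree, hb])⟩
  · rw [hw, map_mul, toRing_ofDegree]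
    exact dvd_mul_right x _

theorem isIntegral_toRing (hd : d ≠ 0) : (toRing 𝒜 d).IsIntegral := by
  classical
  algebraize [toRing 𝒜 d]
  intro b
  rw [← sum_support_decompose 𝒜 b]
  refine IsIntegral.sum _ fun i _ ↦ IsIntegral.of_pow (Int.natAbs_pos.2 hd) ?_
  have hdvd : d ∣ d.natAbs • i := by
    rw [nsmul_eq_mul]
    exact dvd_mul_of_dvd_left Int.dvd_natAbs_self i
  obtain ⟨v, hv⟩ := mem_range_toRing_of_mem hdvd
    (SetLike.pow_mem_graded d.natAbs (SetLike.coe_mem (decompose 𝒜 b i)))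
  exact hv ▸ isIntegral_algebraMap

theorem exists_finiteType (k : Type*) [Field k] [IsDomain B] [Algebra k B] [Algebra.FiniteType k B]
    (hd : d ≠ 0) : ∃ f : k →+* VeroneseRing 𝒜 d, f.FiniteType := by
  refine exists_finiteType_of_isIntegral k (toRing_injective hd) (isIntegral_toRing hd) ?_
  rintro _ ⟨c, rfl⟩
  exact mem_range_toRing_of_mem (dvd_zero d) (algebraMap_mem_zero 𝒜 c)

end VeroneseRing

/-- The degree-zero subring `B_(x)` of the localization `B[1/x]`, where `x` has degree `d`. It is
encoded as the subring generated by the fractions `b / x ^ m` with `b` of degree `m * d`. -/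
def degreeZeroLocalization {B : Type*} [CommRing B] (𝒜 : ℤ → AddSubgroup B) (x : B) (d : ℤ) :
    Subring (Localization.Away x) :=
  Subring.closure { y : Localization.Away x |
    ∃ (m : ℕ) (b : B), b ∈ 𝒜 ((m : ℤ) * d) ∧
      y * (algebraMap B (Localization.Away x) x) ^ m = algebraMap B (Localization.Away x) b }

theorem mem_degreeZeroLocalization {B : Type*} [CommRing B] {𝒜 : ℤ → AddSubgroup B}
    [SetLike.GradedMonoid 𝒜] {x : B} {d : ℤ} (hxd : x ∈ 𝒜 d) {y : Localization.Away x} :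
    y ∈ degreeZeroLocalization 𝒜 x d ↔ ∃ (m : ℕ) (b : B), b ∈ 𝒜 (m * d) ∧
      y * algebraMap B (Localization.Away x) x ^ m = algebraMap B _ b := by
  have hpow (m : ℕ) : x ^ m ∈ 𝒜 (m * d) := nsmul_eq_mul m d ▸ SetLike.pow_mem_graded m hxd
  have hmul {m n : ℕ} {b c : B} (hb : b ∈ 𝒜 (m * d)) (hc : c ∈ 𝒜 (n * d)) :
      b * c ∈ 𝒜 ((m + n : ℕ) * d) := by
    rw [Nat.cast_add, add_mul]
    exact SetLike.GradedMul.mul_mem hb hc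
  refine ⟨fun hy ↦ ?_, fun hy ↦ Subring.subset_closure hy⟩
  induction hy using Subring.closure_induction with
  | mem _ hy => exact hy
  | zero => exact ⟨0, 0, zero_mem _, by rw [zero_mul, map_zero]⟩
  | one => exact ⟨0, 1, pow_zero x ▸ hpow 0, by rw [pow_zero, mul_one, map_one]⟩
  | neg y _ hy =>
    obtain ⟨m, b, hb, hy⟩ := hy
    exact ⟨m, -b, neg_mem hb, by rw [neg_mul, hy, map_neg]⟩
  | mul y z _ _ hy hz =>
    obtain ⟨m, b, hb, hy⟩ := hy
    obtain ⟨n, c, hc, hz⟩ := hz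
    exact ⟨m + n, b * c, hmul hb hc, by rw [pow_add, mul_mul_mul_comm, hy, hz, map_mul]⟩
  | add y z _ _ hy hz =>
    obtain ⟨m, b, hb, hy⟩ := hy
    obtain ⟨n, c, hc, hz⟩ := hz
    refine ⟨m + n, b * x ^ n + x ^ m * c, add_mem (hmul hb (hpow n)) (hmul (hpow m) hc), ?_⟩
    rw [map_add, map_mul, map_mul, map_pow, map_pow, ← hy, ← hz]
    ring

/-- The image of `x` in `B[1/x]`, as a unit. -/
def awayUnit {B : Type*} [CommRing B] (x : B) : (Localization.Away x)ˣ :=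
  (IsLocalization.Away.algebraMap_isUnit x).unit

theorem coe_awayUnit {B : Type*} [CommRing B] (x : B) :
    (awayUnit x : Localization.Away x) = algebraMap B _ x :=
  rfl

namespace VeroneseRing

open AddMonoidAlgebra

variable {B : Type*} [CommRing B] {𝒜 : ℤ → AddSubgroup B} [SetLike.GradedMonoid 𝒜] {x : B} {d : ℤ}

theorem algebraMap_mul_awayUnit_zpow_mem (hxd : x ∈ 𝒜 d) {m : ℤ} {b : B}
    (hb : b ∈ veroneseGrading 𝒜 d m) :
    algebraMap B (Localization.Away x) b * (awayUnit x ^ (-m) : (Localization.Away x)ˣ) ∈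
      degreeZeroLocalization 𝒜 x d := by
  refine Subring.subset_closure ?_
  obtain ⟨n, rfl | rfl⟩ := m.eq_nat_or_neg
  · refine ⟨n, b, hb, ?_⟩
    rw [← coe_awayUnit, zpow_neg, zpow_natCast, ← Units.val_pow_eq_pow_val,
      Units.inv_mul_cancel_right]
  · refine ⟨0, b * x ^ n, ?_, ?_⟩
    · have h := SetLike.GradedMul.mul_mem (A := 𝒜) hb (SetLike.pow_mem_graded (A := 𝒜) n hxd)
      rwa [nsmul_eq_mul, neg_mul, neg_add_cancel, ← zero_mul d] at h
    · rw [neg_neg, zpow_natCast, pow_zero, mul_one, Units.val_pow_eq_pow_val, coe_awayUnit, map_mul,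
        map_pow]

/-- The map `b ↦ b / x ^ m` from the elements of degree `m * d` to `B_(x)`. -/
def divPow (hxd : x ∈ 𝒜 d) (m : ℤ) : veroneseGrading 𝒜 d m →+ degreeZeroLocalization 𝒜 x d :=
  AddMonoidHom.codRestrict
    ((AddMonoidHom.mulRight (awayUnit x ^ (-m) : (Localization.Away x)ˣ).val).comp
      ((algebraMap B (Localization.Away x) : B →+ Localization.Away x).comp
        (veroneseGrading 𝒜 d m).subtype))
    (degreeZeroLocalization 𝒜 x d) fun b ↦ algebraMap_mul_awayUnit_zpow_mem hxd b.2

theorem coe_divPow (hxd : x ∈ 𝒜 d) {m : ℤ} (b : veroneseGrading 𝒜 d m) :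
    (divPow hxd m b : Localization.Away x) =
      algebraMap B _ b * (awayUnit x ^ (-m) : (Localization.Away x)ˣ) :=
  rfl

theorem divPow_one (hxd : x ∈ 𝒜 d) :
    divPow hxd 0 (GradedMonoid.GOne.one (A := fun m ↦ veroneseGrading 𝒜 d m)) = 1 :=
  Subtype.ext <| by
    rw [coe_divPow, SetLike.coe_gOne, neg_zero, zpow_zero, Units.val_one, mul_one, map_one,
      OneMemClass.coe_one]

theorem divPow_mul (hxd : x ∈ 𝒜 d) {m n : ℤ} (a : veroneseGrading 𝒜 d m)
    (b : veroneseGrading 𝒜 d n) :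
    divPow hxd (m + n) (GradedMonoid.GMul.mul (A := fun m ↦ veroneseGrading 𝒜 d m) a b) =
      divPow hxd m a * divPow hxd n b :=
  Subtype.ext <| by
    rw [Subring.coe_mul, coe_divPow, coe_divPow, coe_divPow, SetLike.coe_gMul, map_mul, neg_add,
      zpow_add, Units.val_mul, mul_mul_mul_comm]

theorem divPow_injective [NoZeroDivisors B] (hx : x ≠ 0) (hxd : x ∈ 𝒜 d) (m : ℤ) :
    Function.Injective (divPow hxd m) := fun a b h ↦ by
  have hab : algebraMap B (Localization.Away x) a = algebraMap B _ b :=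
    (Units.mul_left_inj (awayUnit x ^ (-m))).1 <| by rw [← coe_divPow hxd, h, coe_divPow]
  exact Subtype.ext
    (IsLocalization.injective _ (powers_le_nonZeroDivisors_of_noZeroDivisors hx) hab)

/-- The homomorphism from the Veronese ring to the Laurent polynomial ring `B_(x)[T, T⁻¹]` that
maps `b` of degree `m * d` to `(b / x ^ m) T ^ m`. -/
def toLaurent (hxd : x ∈ 𝒜 d) : VeroneseRing 𝒜 d →+* (degreeZeroLocalization 𝒜 x d)[ℤ] :=
  DirectSum.toSemiring (fun m ↦ (singleAddHom m).comp (divPow hxd m))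
    (congrArg (single 0) (divPow_one hxd)) fun {m n} a b ↦
      (congrArg (single (m + n)) (divPow_mul hxd a b)).trans (single_mul_single _ _ _ _).symm

theorem toLaurent_of (hxd : x ∈ 𝒜 d) (m : ℤ) (b : veroneseGrading 𝒜 d m) :
    toLaurent hxd (of (fun m ↦ veroneseGrading 𝒜 d m) m b) = single m (divPow hxd m b) :=
  DirectSum.toSemiring_of _ _ _ _ _

theorem toLaurent_ofDegree (hxd : x ∈ 𝒜 d) :
    toLaurent hxd (ofDegree hxd) = single 1 1 := by
  refine (toLaurent_of hxd 1 _).trans (congrArg (single 1) (Subtype.ext ?_))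
  rw [coe_divPow, zpow_neg_one, ← coe_awayUnit, Units.mul_inv, OneMemClass.coe_one]

theorem coeff_toLaurent (hxd : x ∈ 𝒜 d) (v : VeroneseRing 𝒜 d) (m : ℤ) :
    (toLaurent hxd v).coeff m = divPow hxd m (v m) := by
  induction v using DirectSum.induction_on with
  | zero => simp only [map_zero, DirectSum.zero_apply, coeff_zero, Finsupp.coe_zero, Pi.zero_apply]
  | add v w hv hw =>
    simp only [map_add, coeff_add, Finsupp.add_apply, DirectSum.add_apply, hv, hw]
  | of n b =>
    rw [toLaurent_of, coeff_single]
    obtain rfl | hnm := eq_or_ne n m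
    · rw [Finsupp.single_eq_same, of_eq_same]
    · rw [Finsupp.single_eq_of_ne hnm.symm, of_eq_of_ne _ _ _ hnm.symm, map_zero]

theorem toLaurent_injective [NoZeroDivisors B] (hx : x ≠ 0) (hxd : x ∈ 𝒜 d) :
    Function.Injective (toLaurent hxd) := fun v w h ↦
  DFinsupp.ext fun m ↦ divPow_injective hx hxd m <| by
    rw [← coeff_toLaurent, h, coeff_toLaurent]

theorem toLaurent_ofDegree_pow (hxd : x ∈ 𝒜 d) (n : ℕ) :
    toLaurent hxd (ofDegree hxd) ^ n = single (n : ℤ) 1 := by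
  rw [toLaurent_ofDegree, single_pow, nsmul_one, one_pow]

theorem exists_single_mul_pow_eq_toLaurent (hxd : x ∈ 𝒜 d) (i : ℤ)
    (a : degreeZeroLocalization 𝒜 x d) :
    ∃ (n : ℕ) (v : VeroneseRing 𝒜 d),
      single i a * toLaurent hxd (ofDegree hxd) ^ n = toLaurent hxd v := by
  obtain ⟨m, b, hb, ha⟩ := (mem_degreeZeroLocalization hxd).1 a.2
  have hba : divPow hxd m ⟨b, hb⟩ = a := Subtype.ext <| by
    rw [coe_divPow, ← ha, ← coe_awayUnit, zpow_neg, zpow_natCast, ← Units.val_pow_eq_pow_val,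
      Units.mul_inv_cancel_right]
  obtain ⟨j, hj⟩ := Int.eq_ofNat_of_zero_le (neg_le_iff_add_nonneg.1 (neg_abs_le i))
  refine ⟨m + i.natAbs, of (fun m ↦ veroneseGrading 𝒜 d m) m ⟨b, hb⟩ * ofDegree hxd ^ j, ?_⟩
  rw [map_mul, map_pow, toLaurent_ofDegree_pow, toLaurent_ofDegree_pow, toLaurent_of, hba,
    single_mul_single, single_mul_single, Nat.cast_add, Int.natCast_natAbs, ← hj, add_left_comm]

theorem exists_mul_pow_eq_toLaurent (hxd : x ∈ 𝒜 d) (p : (degreeZeroLocalization 𝒜 x d)[ℤ]) :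
    ∃ (n : ℕ) (v : VeroneseRing 𝒜 d),
      p * toLaurent hxd (ofDegree hxd) ^ n = toLaurent hxd v := by
  induction p using induction_linear with
  | zero => exact ⟨0, 0, by rw [zero_mul, map_zero]⟩
  | add p q hp hq =>
    obtain ⟨m, v, hv⟩ := hp
    obtain ⟨n, w, hw⟩ := hq
    refine ⟨m + n, v * ofDegree hxd ^ n + w * ofDegree hxd ^ m, ?_⟩
    rw [map_add, map_mul, map_mul, map_pow, map_pow, ← hv, ← hw]
    ring
  | single i a => exact exists_single_mul_pow_eq_toLaurent hxd i a

theorem isLocalizationAway_toLaurent [NoZeroDivisors B] (hx : x ≠ 0) (hxd : x ∈ 𝒜 d) :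
    letI := (toLaurent hxd).toAlgebra
    IsLocalization.Away (ofDegree hxd) (degreeZeroLocalization 𝒜 x d)[ℤ] := by
  let := (toLaurent hxd).toAlgebra
  refine .mk _ ?_ (exists_mul_pow_eq_toLaurent hxd) fun v w h ↦ ⟨0, ?_⟩
  · rw [RingHom.algebraMap_toAlgebra, toLaurent_ofDegree]
    refine .of_mul_eq_one (single (-1) 1) ?_
    rw [single_mul_single, add_neg_cancel, mul_one, AddMonoidAlgebra.one_def]
  · rw [toLaurent_injective hx hxd h]

end VeroneseRing

/-- The `d`-th Veronese subring of the graded ring `B / xB`. It is encoded as the subring generated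
by the classes of the homogeneous elements of `B` whose degree is a multiple of `d`. -/
def quotientVeronese {B : Type*} [CommRing B] (𝒜 : ℤ → AddSubgroup B) (x : B) (d : ℤ) :
    Subring (B ⧸ Ideal.span {x}) :=
  Subring.closure (⋃ i ∈ {i : ℤ | d ∣ i},
    (Ideal.Quotient.mk (Ideal.span {x})) '' (𝒜 i : Set B))

theorem range_mk_comp_toRing {B : Type*} [CommRing B] (𝒜 : ℤ → AddSubgroup B)
    [SetLike.GradedMonoid 𝒜] (x : B) (d : ℤ) :
    ((Ideal.Quotient.mk (Ideal.span {x})).comp (VeroneseRing.toRing 𝒜 d)).range =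
      quotientVeronese 𝒜 x d := by
  refine le_antisymm ?_ (Subring.closure_le.2 ?_)
  · rintro _ ⟨v, rfl⟩
    induction v using DirectSum.induction_on with
    | zero => rw [map_zero]; exact zero_mem _
    | add v w hv hw => rw [map_add]; exact add_mem hv hw
    | of m b =>
      rw [RingHom.comp_apply, coeRingHom_of]
      exact Subring.subset_closure
        (Set.mem_biUnion (Dvd.intro_left m rfl) (Set.mem_image_of_mem _ b.2))
  · refine Set.iUnion₂_subset fun i hi ↦ ?_
    rintro _ ⟨b, hb, rfl⟩
    obtain ⟨v, rfl⟩ := VeroneseRing.mem_range_toRing_of_mem hi hb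
    exact ⟨v, rfl⟩

theorem nonrigid_of_nonrigid_degree_zero_localization_general (k : Type*) {B : Type*} [Field k]
    [CharZero k] [CommRing B] [IsDomain B] [Algebra k B] [Algebra.FiniteType k B]
    (𝒜 : ℤ → AddSubgroup B) [GradedRing 𝒜] {x : B} (hx₀ : x ≠ 0) (hxu : ¬ IsUnit x) {d : ℤ}
    (hd : d ≠ 0) (hxd : x ∈ 𝒜 d) (hnr : IsNonrigid (degreeZeroLocalization 𝒜 x d)) :
    IsNonrigid (quotientVeronese 𝒜 x d) := by
  obtain ⟨f, hf⟩ := VeroneseRing.exists_finiteType (𝒜 := 𝒜) k hd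
  let := (VeroneseRing.toLaurent hxd).toAlgebra
  algebraize [f]
  have := VeroneseRing.isLocalizationAway_toLaurent hx₀ hxd
  have : IsDomain (VeroneseRing 𝒜 d) := (VeroneseRing.toRing_injective hd).isDomain _
  have hx₀' : VeroneseRing.ofDegree hxd ≠ 0 := fun h ↦
    hx₀ (by rw [← VeroneseRing.toRing_ofDegree hxd, h, map_zero])
  have hxu' : ¬ IsUnit (VeroneseRing.ofDegree hxd) := fun h ↦
    hxu (VeroneseRing.toRing_ofDegree hxd ▸ h.map (VeroneseRing.toRing 𝒜 d))
  rw [← range_mk_comp_toRing]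
  exact .of_isLocalization_away k hx₀' hxu' (RingHom.rangeRestrict_surjective _)
    ((RingHom.ker_rangeRestrict _).trans (VeroneseRing.ker_mk_comp_toRing hd hx₀ hxd))
    (hnr.addMonoidAlgebra ℤ)

/-- Let k be a field of characteristic 0 and B = ⊕_{n ∈ ℕ} B_n an ℕ-graded normal
affine k-domain (formalized as a ℤ-graded ring with vanishing negative pieces) such
that the prime ideal B₊ = ⊕_{n > 0} B_n has height at least 2.  Let x be a homogeneous
prime element of B of degree d > 0.  If B_{(x)} (the degree-0 subring of the ℤ-graded
localization B[1/x], i.e. the set of fractions b/xᵐ with b homogeneous of degree m·d)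
is non-rigid, then so is the d-th Veronese subring (B/xB)^{(d)} of B/xB. -/
theorem nonrigid_of_nonrigid_degree_zero_localization
    {k : Type*} [Field k] [CharZero k]
    {B : Type*} [CommRing B] [IsDomain B] [IsIntegrallyClosed B]
    [Algebra k B] [Algebra.FiniteType k B]
    (𝒜 : ℤ → AddSubgroup B) [GradedRing 𝒜]
    (hNN : ∀ i : ℤ, i < 0 → 𝒜 i = ⊥)
    -- the ideal B₊ is prime of height at least 2 :
    (hBplusPrime : (Ideal.span (⋃ i ∈ {i : ℤ | 0 < i}, (𝒜 i : Set B))).IsPrime)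
    (hht2 : ∃ q r : Ideal B, q.IsPrime ∧ r.IsPrime ∧ q < r ∧
      r < Ideal.span (⋃ i ∈ {i : ℤ | 0 < i}, (𝒜 i : Set B)))
    (x : B) (hx : Prime x) (d : ℤ) (hd : 0 < d) (hxd : x ∈ 𝒜 d)
    -- B_{(x)} is non-rigid :
    (hnr : ∃ D : Derivation ℤ
        (Subring.closure { y : Localization.Away x |
          ∃ (m : ℕ) (b : B), b ∈ 𝒜 ((m : ℤ) * d) ∧
            y * (algebraMap B (Localization.Away x) x) ^ m
              = algebraMap B (Localization.Away x) b })
        (Subring.closure { y : Localization.Away x |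
          ∃ (m : ℕ) (b : B), b ∈ 𝒜 ((m : ℤ) * d) ∧
            y * (algebraMap B (Localization.Away x) x) ^ m
              = algebraMap B (Localization.Away x) b }),
      IsLND D ∧ D ≠ 0) :
    -- then (B/xB)^{(d)} is non-rigid :
    ∃ D : Derivation ℤ
        (Subring.closure (⋃ i ∈ {i : ℤ | d ∣ i},
          (Ideal.Quotient.mk (Ideal.span {x})) '' (𝒜 i : Set B)))
        (Subring.closure (⋃ i ∈ {i : ℤ | d ∣ i},
          (Ideal.Quotient.mk (Ideal.span {x})) '' (𝒜 i : Set B))),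
      IsLND D ∧ D ≠ 0 :=
  nonrigid_of_nonrigid_degree_zero_localization_general k 𝒜 hx.ne_zero hx.not_isUnit hd.ne' hxd hnr
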